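/- For every Π⁰₁ set S ⊆ ω, there exist three computable permutations β, σ, τ of ω generating a group G whose word problem (the set of words in F(β,σ,τ) equal to 1 in G) is truth-table equivalent to S. -/

import Mathlib

/-- The c.e. set with index `e` in a standard enumeration. -/
def WSet (e : ℕ) : Set ℕ := {n | ((Denumerable.ofNat Nat.Partrec.Code e).eval n).Dom}

/-- A set of naturals is computably enumerable. -/
def CeSet (A : Set ℕ) : Prop := ∃ e : ℕ, A = WSet e

/-- Product of two sets of naturals under the standard pairing. -/
def ProdSet (A C : Set ℕ) : Set ℕ := {p | p.unpair.1 ∈ A ∧ p.unpair.2 ∈ C}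

/-- `(A, B)` is an effectively inseparable pair. -/
def EffInsep (A B : Set ℕ) : Prop :=
  ∃ ψ : ℕ →. ℕ, Partrec ψ ∧
    ∀ u v : ℕ, A ⊆ WSet u → B ⊆ WSet v → WSet u ∩ WSet v = ∅ →
      ∃ z ∈ ψ (Nat.pair u v), z ∉ WSet u ∪ WSet v
open Classical in
/-- Truth-table reducibility: a total reduction procedure computing, for each
input, a finite list of queries together with a Boolean evaluation of the
answers, fixed in advance. -/
def TTRed (A B : Set ℕ) : Prop :=
  ∃ q : ℕ → List ℕ, ∃ t : ℕ → List Bool → Bool,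
    Computable q ∧ Computable₂ t ∧
    ∀ n : ℕ, n ∈ A ↔ t n ((q n).map fun m => decide (m ∈ B)) = true

/-- Truth-table equivalence. -/
def TTEquiv (A B : Set ℕ) : Prop := TTRed A B ∧ TTRed B A

/-!
A group generated by three permutations is built from decorated lines `ℤ × Fin 3`: the generator `β`
translates the line, while `σ` and `τ` only act on the fibre over one marked position each, `σ` by
`(0 1)` over the origin and `τ` by `(1 2)` over some `n`. These transpositions do not commute, so
the commutator `⁅σ, β⁻ⁿ τ βⁿ⁆` is trivial on such a line unless both marks are present and `τ` is
marked exactly over `n`.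

Let `c` be a program that halts exactly on the complement of `S`. The group acts on the disjoint
union of the lines indexed by `(n, t)`, where `τ` is marked over `n` only if `c` halts on input `n`
within `t` steps; this is decidable, so the generators are computable. One more line carries only
the mark of `τ`. A line with both marks, `n` apart, occurs if and only if `n ∉ S`, so the commutator
above reduces `S` to the word problem.
Conversely, a word of length `ℓ` sees a window of radius `ℓ` around its starting point. If `n > 2ℓ`,
no window contains both marks, and triviality of the word reduces to the lines with a single mark;
so the word problem is decided by asking whether `n ∈ S` for `n ≤ 2ℓ`.
-/

open Encodable
open Equiv (Perm)
open Nat.Partrec (Code)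

section PrimitiveRecursion

variable {ι α σ : Type*} [Primcodable ι] [Primcodable α] [Primcodable σ]

theorem primrec_of_forall_fiber [Finite ι] {f : ι → α → σ} (hf : ∀ i, Primrec (f i)) :
    Primrec fun a : ι × α => f a.1 a.2 := by
  classical
  suffices h : ∀ L : List ι, ∃ g : ι × α → Option σ,
      Primrec g ∧ ∀ i ∈ L, ∀ a, g (i, a) = some (f i a) by
    obtain ⟨L, -, hL⟩ := Finite.exists_univ_list ι
    obtain ⟨g, hg, hgf⟩ := h L
    exact Primrec.option_some_iff.1 (hg.of_eq fun a => hgf a.1 (hL a.1) a.2)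
  intro L
  induction L with
  | nil => exact ⟨fun _ => none, .const _, by simp⟩
  | cons j L ih =>
    obtain ⟨g, hg, hgf⟩ := ih
    refine ⟨fun a => if a.1 = j then some (f j a.2) else g a,
      Primrec.ite (Primrec.eq.comp .fst (.const j))
        (Primrec.option_some.comp ((hf j).comp .snd)) hg, fun i hi a => ?_⟩
    by_cases hij : i = j
    · simp [hij]
    · simpa [hij] using hgf i ((List.mem_cons.1 hi).resolve_left hij) a

theorem primrec_lift_mk_apply [Finite ι] {g : α → ι → Perm σ}
    (hg : ∀ i, Primrec fun a : α × σ => g a.1 i a.2)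
    (hg_inv : ∀ i, Primrec fun a : α × σ => (g a.1 i)⁻¹ a.2) :
    Primrec fun a : (α × List (ι × Bool)) × σ => FreeGroup.lift (g a.1.1) (.mk a.1.2) a.2 := by
  have h_letter : ∀ l : ι × Bool,
      Primrec fun a : α × σ => (cond l.2 (g a.1 l.1) (g a.1 l.1)⁻¹) a.2 := by
    rintro ⟨i, _ | _⟩
    exacts [hg_inv i, hg i]
  refine (Primrec.list_foldr (f := fun a : (α × List (ι × Bool)) × σ => a.1.2)
    (g := fun a => a.2)
    (h := fun a ls => (cond ls.1.2 (g a.1.1 ls.1.1) (g a.1.1 ls.1.1)⁻¹) ls.2)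
    (Primrec.snd.comp .fst) .snd ((primrec_of_forall_fiber h_letter).comp
      ((Primrec.fst.comp .snd).pair (((Primrec.fst.comp .fst).comp .fst).pair
        (Primrec.snd.comp .snd))))).of_eq fun ⟨⟨a, w⟩, s⟩ => ?_
  induction w with
  | nil => rfl
  | cons l w ih => exact congrArg ⇑(cond l.2 (g a l.1) (g a l.1)⁻¹) ih

theorem primrec_list_replicate (a : α) : Primrec fun n => List.replicate n a :=
  (Primrec.list_map Primrec.list_range (Primrec.const a).to₂).of_eq fun n => by simp

theorem encode_int (p : ℤ) : encode p = if 0 ≤ p then 2 * p.toNat else 2 * (-p - 1).toNat + 1 := by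
  cases p with
  | ofNat n =>
    rw [show encode (Int.ofNat n) = 2 * n from rfl]
    simp
  | negSucc n =>
    rw [show encode (Int.negSucc n) = 2 * n + 1 from rfl]
    grind

theorem primrec_natCast : Primrec (Nat.cast : ℕ → ℤ) :=
  Primrec.encode_iff.1 (Primrec.nat_mul.comp (.const 2) .id)

theorem primrec_int_add_one : Primrec fun p : ℤ => p + 1 := by
  refine Primrec.encode_iff.1 ((Primrec.ite (Primrec.eq.comp (Primrec.nat_mod.comp
    .encode (.const 2)) (.const 0)) (Primrec.nat_add.comp .encode (.const 2))
    (Primrec.nat_sub.comp .encode (.const 2))).of_eq fun p => ?_)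
  rw [encode_int, encode_int]
  grind

theorem primrec_int_sub_one : Primrec fun p : ℤ => p - 1 := by
  refine Primrec.encode_iff.1 ((Primrec.ite (Primrec.eq.comp .encode (.const 0)) (.const 1)
    (Primrec.ite (Primrec.eq.comp (Primrec.nat_mod.comp .encode (.const 2)) (.const 0))
      (Primrec.nat_sub.comp .encode (.const 2))
      (Primrec.nat_add.comp .encode (.const 2)))).of_eq fun p => ?_)
  rw [encode_int, encode_int]
  grind

end PrimitiveRecursion

section TruthTable

theorem TTRed.of_manyOneReducible {A B : Set ℕ} (h : (· ∈ A) ≤₀ (· ∈ B)) : TTRed A B := by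
  classical
  obtain ⟨f, hf, hAB⟩ := h
  refine ⟨fun n => [f n], fun _ L => L.headI, ?_, ?_, fun n => ?_⟩
  · exact Computable.list_cons.comp hf (.const [])
  · exact (Primrec.list_headI.comp Primrec.snd).to_comp
  · simpa using hAB n

theorem TTRed.encode_image {α : Type*} [Primcodable α] {A : Set α} {B : Set ℕ} {b : α → ℕ}
    {R : α → Prop} {P : ℕ → α → Prop} (hb : Primrec b) (hR : PrimrecPred R) (hP : PrimrecRel P)
    (hA : ∀ a, a ∈ A ↔ R a ∧ ∀ n < b a, n ∈ B ∨ P n a) : TTRed (encode '' A) B := by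
  classical
  let accepts (a : α) (L : List Bool) : Prop := R a ∧ ∀ n < b a, L.getD n false = true ∨ P n a
  have h_accepts : PrimrecPred fun x : α × List Bool => accepts x.1 x.2 := by
    have h_answer : PrimrecRel fun (n : ℕ) (x : α × List Bool) =>
        x.2.getD n false = true ∨ P n x.1 :=
      .or (Primrec.eq.comp ((Primrec.list_getD false).comp (Primrec.snd.comp .snd) .fst)
        (.const true)) (hP.comp .fst (Primrec.fst.comp .snd))
    refine (hR.comp .fst).and ((h_answer.forall_mem_list.comp
      (Primrec.list_range.comp (hb.comp .fst)) .id).of_eq fun x => ?_)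
    simp only [List.mem_range, id]
  have h_correct (a : α) :
      a ∈ A ↔ accepts a ((List.range (b a)).map fun m => decide (m ∈ B)) := by
    simp +contextual only [hA, accepts, List.getD_eq_getElem?_getD, List.getElem?_map,
      List.getElem?_range, Option.map_some, Option.getD_some, decide_eq_true_eq]
  refine ⟨fun m => (decode₂ α m).elim [] fun a => List.range (b a),
    fun m L => (decode₂ α m).elim false fun a => decide (accepts a L), ?_, ?_, fun m => ?_⟩
  · refine ((Primrec.option_casesOn Primrec.decode₂ (.const [])
      (Primrec.list_range.comp (hb.comp .snd)).to₂).of_eq fun m => ?_).to_comp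
    cases decode₂ α m <;> rfl
  · refine ((Primrec.option_casesOn (Primrec.decode₂.comp .fst) (.const false)
      (h_accepts.decide.comp (Primrec.snd.pair (Primrec.snd.comp .fst))).to₂).of_eq
      fun x => ?_).to_comp
    dsimp only
    cases decode₂ α x.1 <;> rfl
  · cases hm : decode₂ α m with
    | none =>
      have : ∀ a : α, encode a ≠ m := fun a ha => by simp [← ha] at hm
      simp [hm, this]
    | some a =>
      obtain rfl : encode a = m := mem_decode₂.1 hm
      simp only [encode_injective.mem_set_image, h_correct, hm, Option.elim_some, decide_eq_true_eq]

end TruthTable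

section Fiberwise

variable {α β : Type*}

/-- The permutation of `α × β` that acts on the fibre over `a` by `u a`. -/
def fiberwise : (α → Perm β) →* Perm (α × β) where
  toFun := Equiv.prodCongrRight
  map_one' := rfl
  map_mul' _ _ := rfl

theorem fiberwise_apply (u : α → Perm β) (s : α × β) : fiberwise u s = (s.1, u s.1 s.2) := rfl

theorem fiberwise_injective : Function.Injective (fiberwise : (α → Perm β) →* _) :=
  fun _ _ h => funext fun a => Equiv.ext fun b => congrArg Prod.snd (Equiv.congr_fun h (a, b))

theorem lift_fiberwise {ι : Type*} (g : α → ι → Perm β) (w : FreeGroup ι) :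
    FreeGroup.lift (fun i => fiberwise fun a => g a i) w =
      fiberwise fun a => FreeGroup.lift (g a) w :=
  (FreeGroup.lift_unique (fiberwise.comp (MonoidHom.pi fun a => FreeGroup.lift (g a)))
    fun _ => congrArg fiberwise (funext fun _ => FreeGroup.lift_apply_of)).symm

end Fiberwise

section CodePerm

/-- The action on codes of a permutation of an encodable type; numbers that are not codes are
fixed. -/
noncomputable def codePerm {α : Type*} [Encodable α] : Perm α →* Perm ℕ :=
  Perm.viaEmbeddingHom ⟨encode, encode_injective⟩

theorem codePerm_injective {α : Type*} [Encodable α] :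
    Function.Injective (codePerm : Perm α →* _) :=
  Perm.viaEmbeddingHom_injective _

theorem computable_codePerm {α : Type*} [Primcodable α] {e : Perm α} (he : Computable e) :
    Computable (codePerm e) := by
  refine (Computable.option_casesOn Primrec.decode₂.to_comp .id
    (Computable.encode.comp (he.comp .snd)).to₂).of_eq fun m => ?_
  cases hm : decode₂ α m with
  | none =>
    exact (Perm.viaEmbedding_apply_of_notMem e ⟨encode, encode_injective⟩ m
      fun ⟨a, ha⟩ => by simp [← ha] at hm).symm
  | some a =>
    obtain rfl : encode a = m := mem_decode₂.1 hm
    exact (Perm.viaEmbedding_apply e ⟨encode, encode_injective⟩ a).symm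

theorem lift_codePerm_fiberwise_eq_one_iff {ι α β : Type*} [Encodable α] [Encodable β]
    (g : α → ι → Perm β) (w : FreeGroup ι) :
    FreeGroup.lift (fun i => codePerm (fiberwise fun a => g a i)) w = 1 ↔
      ∀ a, FreeGroup.lift (g a) w = 1 := by
  have h_lift : FreeGroup.lift (fun i => codePerm (fiberwise fun a => g a i)) w =
      codePerm (fiberwise fun a => FreeGroup.lift (g a) w) := by
    rw [← lift_fiberwise]
    exact (FreeGroup.lift_unique (codePerm.comp (FreeGroup.lift _))
      fun _ => congrArg codePerm FreeGroup.lift_apply_of).symm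
  rw [h_lift, map_eq_one_iff _ codePerm_injective, map_eq_one_iff _ fiberwise_injective]
  exact funext_iff

end CodePerm

section DecoratedLine

variable {ι : Type*}

/-- The translation by `d` of the base of the bundle `ℤ × ι` over the integer line. -/
def lineShift (d : ℤ) : Perm (ℤ × ι) := (Equiv.addRight d).prodCongr (Equiv.refl ι)

theorem lineShift_apply (d : ℤ) (s : ℤ × ι) : lineShift d s = (s.1 + d, s.2) := rfl

theorem lineShift_one_pow (n : ℕ) : (lineShift 1 : Perm (ℤ × ι)) ^ n = lineShift n := by
  induction n with
  | zero => ext s <;> simp [lineShift_apply]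
  | succ n ih => ext s <;> simp [pow_succ, ih, lineShift_apply]; ring

theorem lineShift_mul (d e : ℤ) :
    (lineShift d * lineShift e : Perm (ℤ × ι)) = lineShift (d + e) := by
  ext s <;> simp [lineShift_apply]; ring

theorem lineShift_inv (d : ℤ) : (lineShift d : Perm (ℤ × ι))⁻¹ = lineShift (-d) := by
  ext s <;> rfl

theorem lineShift_conj_fiberwise (d : ℤ) (u : ℤ → Perm ι) :
    (lineShift d)⁻¹ * fiberwise u * lineShift d = fiberwise fun p => u (p + d) := by
  rw [mul_assoc, inv_mul_eq_iff_eq_mul]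
  ext s <;> simp [fiberwise_apply, lineShift_apply]

/-- The permutations `β, σ, τ` of a line whose fibres are decorated by `u` and `v`: `β` is the unit
translation, while `σ` and `τ` act on the fibre over `p` by `u p` and `v p`. -/
def lineGen (u v : ℤ → Perm ι) : Fin 3 → Perm (ℤ × ι) := ![lineShift 1, fiberwise u, fiberwise v]

theorem lineGen_zero (u v : ℤ → Perm ι) : lineGen u v 0 = lineShift 1 := rfl

theorem lineGen_two (u v : ℤ → Perm ι) : lineGen u v 2 = fiberwise v := rfl

/-- The action of the free group on a decorated line. -/
def lineAction (u v : ℤ → Perm ι) : FreeGroup (Fin 3) →* Perm (ℤ × ι) :=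
  FreeGroup.lift (lineGen u v)

variable {u v u' v' : ℤ → Perm ι}

theorem lineAction_mk_cons_apply (l : Fin 3 × Bool) (w : List (Fin 3 × Bool)) (s : ℤ × ι) :
    lineAction u v (.mk (l :: w)) s =
      (cond l.2 (lineGen u v l.1) (lineGen u v l.1)⁻¹) (lineAction u v (.mk w) s) :=
  rfl

theorem lineAction_add_right (u v : ℤ → Perm ι) (d : ℤ) (w : FreeGroup (Fin 3)) :
    lineAction (fun p => u (p + d)) (fun p => v (p + d)) w =
      (lineShift d)⁻¹ * lineAction u v w * lineShift d := by
  have h : lineAction (fun p => u (p + d)) (fun p => v (p + d)) =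
      (MulAut.conj (lineShift d)⁻¹).toMonoidHom.comp (lineAction u v) := by
    ext i : 1
    simp only [lineAction, FreeGroup.lift_apply_of, MonoidHom.comp_apply,
      MulEquiv.toMonoidHom_eq_coe, MonoidHom.coe_coe, MulAut.conj_apply, inv_inv]
    fin_cases i
    · exact show lineShift 1 = (lineShift d)⁻¹ * lineShift 1 * lineShift d by
        rw [mul_assoc, eq_inv_mul_iff_mul_eq, lineShift_mul, lineShift_mul, add_comm]
    · exact (lineShift_conj_fiberwise d u).symm
    · exact (lineShift_conj_fiberwise d v).symm
  simp [h]

theorem lineAction_add_right_eq_one_iff (d : ℤ) (w : FreeGroup (Fin 3)) :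
    lineAction (fun p => u (p + d)) (fun p => v (p + d)) w = 1 ↔ lineAction u v w = 1 := by
  rw [lineAction_add_right, mul_assoc, inv_mul_eq_one, right_eq_mul]

theorem abs_lineGen_fst_sub_le (l : Fin 3 × Bool) (s : ℤ × ι) :
    |((cond l.2 (lineGen u v l.1) (lineGen u v l.1)⁻¹) s).1 - s.1| ≤ 1 := by
  obtain ⟨i, _ | _⟩ := l <;> fin_cases i <;>
    simp [lineGen, lineShift_apply, fiberwise_apply, lineShift_inv, ← map_inv]

theorem abs_lineAction_fst_sub_le (w : List (Fin 3 × Bool)) (s : ℤ × ι) :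
    |(lineAction u v (.mk w) s).1 - s.1| ≤ w.length := by
  induction w with
  | nil => simp [← FreeGroup.one_eq_mk]
  | cons l w ih =>
    have := abs_lineGen_fst_sub_le (u := u) (v := v) l (lineAction u v (.mk w) s)
    rw [lineAction_mk_cons_apply, List.length_cons]
    grind

theorem lineGen_congr (l : Fin 3 × Bool) (s : ℤ × ι) (hu : u s.1 = u' s.1) (hv : v s.1 = v' s.1) :
    (cond l.2 (lineGen u v l.1) (lineGen u v l.1)⁻¹) s =
      (cond l.2 (lineGen u' v' l.1) (lineGen u' v' l.1)⁻¹) s := by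
  obtain ⟨i, _ | _⟩ := l <;> fin_cases i <;>
    simp [lineGen, lineShift_apply, fiberwise_apply, ← map_inv, hu, hv]

theorem lineAction_congr {w : List (Fin 3 × Bool)} {s : ℤ × ι}
    (h : ∀ q, |q - s.1| ≤ w.length → u q = u' q ∧ v q = v' q) :
    lineAction u v (.mk w) s = lineAction u' v' (.mk w) s := by
  induction w with
  | nil => rfl
  | cons l w ih =>
    have h_near : |(lineAction u v (.mk w) s).1 - s.1| ≤ (l :: w).length := by
      grind [abs_lineAction_fst_sub_le (u := u) (v := v) w s]
    rw [lineAction_mk_cons_apply, lineAction_mk_cons_apply,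
      lineGen_congr l _ (h _ h_near).1 (h _ h_near).2, ih fun q hq => h q (by grind)]

theorem lineAction_one_one_eq_one {w : FreeGroup (Fin 3)} {p : ℤ}
    (h : ∀ i : ι, lineAction 1 1 w (p, i) = (p, i)) : lineAction (1 : ℤ → Perm ι) 1 w = 1 := by
  ext1 ⟨q, i⟩
  refine (Equiv.congr_fun (lineAction_add_right (1 : ℤ → Perm ι) 1 (p - q) w) (q, i)).trans ?_
  rw [Perm.mul_apply, Perm.mul_apply, Perm.inv_eq_iff_eq]
  simp [lineShift_apply, h]

/-- Outside the radius `N + |w|` every point sees the undecorated line, which looks the same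
everywhere. -/
theorem lineAction_mk_eq_one_iff_of_support {N : ℕ} (hu : ∀ q : ℤ, N < |q| → u q = 1)
    (hv : ∀ q : ℤ, N < |q| → v q = 1) (w : List (Fin 3 × Bool)) :
    lineAction u v (.mk w) = 1 ↔
      ∀ p : ℤ, |p| ≤ N + w.length + 1 → ∀ i, lineAction u v (.mk w) (p, i) = (p, i) := by
  refine ⟨fun h p _ i => by rw [h, Perm.one_apply], fun h => ?_⟩
  have h_far {p : ℤ} (hp : N + w.length < |p|) (i : ι) :
      lineAction u v (.mk w) (p, i) = lineAction 1 1 (.mk w) (p, i) :=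
    lineAction_congr fun q hq => ⟨hu q (by grind), hv q (by grind)⟩
  have h_blank : lineAction (1 : ℤ → Perm ι) 1 (.mk w) = 1 :=
    lineAction_one_one_eq_one (p := N + w.length + 1) fun i => by
      rw [← h_far (by grind), h _ (by grind)]
  ext1 ⟨p, i⟩
  by_cases hp : N + w.length < |p|
  · rw [h_far hp, h_blank]
  · exact h p (by omega) i

theorem lineAction_mk_eq_one_of_far_apart {w : List (Fin 3 × Bool)}
    (hu : lineAction u 1 (.mk w) = 1) (hv : lineAction 1 v (.mk w) = 1)
    (h_far : ∀ p q, u p ≠ 1 → v q ≠ 1 → 2 * w.length < |p - q|) :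
    lineAction u v (.mk w) = 1 := by
  ext1 s
  by_cases hs : ∃ p, |p - s.1| ≤ w.length ∧ u p ≠ 1
  · obtain ⟨p, hp, hup⟩ := hs
    have h_blank : ∀ q, |q - s.1| ≤ w.length → v q = 1 := fun q hq => by
      by_contra hvq
      have h_apart := h_far p q hup hvq
      have h_close := abs_sub_le p s.1 q
      rw [abs_sub_comm s.1 q] at h_close
      omega
    rw [lineAction_congr fun q hq => ⟨rfl, h_blank q hq⟩]
    exact Equiv.congr_fun hu s
  · push Not at hs
    rw [lineAction_congr fun q hq => ⟨hs q hq, rfl⟩]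
    exact Equiv.congr_fun hv s

end DecoratedLine

section Decidability

variable {ι α : Type*} [Primcodable ι] [Primcodable α] {u v : α → ℤ → Perm ι}

theorem primrec_lineGen (hu : Primrec fun x : α × (ℤ × ι) => u x.1 x.2.1 x.2.2)
    (hv : Primrec fun x : α × (ℤ × ι) => v x.1 x.2.1 x.2.2) (i : Fin 3) :
    Primrec fun x : α × (ℤ × ι) => lineGen (u x.1) (v x.1) i x.2 := by
  fin_cases i
  · exact (primrec_int_add_one.comp (Primrec.fst.comp .snd)).pair (Primrec.snd.comp .snd)
  · exact (Primrec.fst.comp .snd).pair hu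
  · exact (Primrec.fst.comp .snd).pair hv

theorem primrec_lineGen_inv (hu : Primrec fun x : α × (ℤ × ι) => (u x.1 x.2.1)⁻¹ x.2.2)
    (hv : Primrec fun x : α × (ℤ × ι) => (v x.1 x.2.1)⁻¹ x.2.2) (i : Fin 3) :
    Primrec fun x : α × (ℤ × ι) => (lineGen (u x.1) (v x.1) i)⁻¹ x.2 := by
  fin_cases i
  · exact (primrec_int_sub_one.comp (Primrec.fst.comp .snd)).pair (Primrec.snd.comp .snd)
  · exact (Primrec.fst.comp .snd).pair hu
  · exact (Primrec.fst.comp .snd).pair hv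

theorem primrecRel_lineAction_mk_eq_one [Finite ι] {N : α → ℕ} (hN : Primrec N)
    (hu_supp : ∀ a, ∀ q : ℤ, N a < |q| → u a q = 1)
    (hv_supp : ∀ a, ∀ q : ℤ, N a < |q| → v a q = 1)
    (hu : Primrec fun x : α × (ℤ × ι) => u x.1 x.2.1 x.2.2)
    (hv : Primrec fun x : α × (ℤ × ι) => v x.1 x.2.1 x.2.2)
    (hu_inv : Primrec fun x : α × (ℤ × ι) => (u x.1 x.2.1)⁻¹ x.2.2)
    (hv_inv : Primrec fun x : α × (ℤ × ι) => (v x.1 x.2.1)⁻¹ x.2.2) :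
    PrimrecRel fun a (w : List (Fin 3 × Bool)) => lineAction (u a) (v a) (.mk w) = 1 := by
  obtain ⟨L, -, hL⟩ := Finite.exists_univ_list ι
  let fixes (x : α × List (Fin 3 × Bool)) (s : ℤ × ι) : Prop :=
    lineAction (u x.1) (v x.1) (.mk x.2) s = s
  have h_fixes : PrimrecRel fixes := Primrec.eq.comp
    (primrec_lift_mk_apply (g := fun a => lineGen (u a) (v a)) (primrec_lineGen hu hv)
      (primrec_lineGen_inv hu_inv hv_inv)) .snd
  have h_point : PrimrecRel fun (i : ι) (y : ℕ × α × List (Fin 3 × Bool)) =>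
      fixes y.2 (Denumerable.ofNat ℤ y.1, i) :=
    h_fixes.comp (Primrec.snd.comp .snd)
      (((Primrec.ofNat ℤ).comp (Primrec.fst.comp .snd)).pair .fst)
  have h_fibre : PrimrecRel fun (z : ℕ) (x : α × List (Fin 3 × Bool)) =>
      ∀ i ∈ L, fixes x (Denumerable.ofNat ℤ z, i) :=
    h_point.forall_mem_list.comp (.const L) .id
  let bound (x : α × List (Fin 3 × Bool)) : ℕ := 2 * (N x.1 + x.2.length + 1) + 1
  have h_bound : Primrec bound := Primrec.succ.comp (Primrec.nat_mul.comp (.const 2)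
    (Primrec.succ.comp (Primrec.nat_add.comp (hN.comp .fst) (Primrec.list_length.comp .snd))))
  refine (h_fibre.forall_mem_list.comp (Primrec.list_range.comp h_bound) .id).of_eq fun x => ?_
  simp only [List.mem_range, id]
  refine ⟨fun h => ?_, fun h z _ i _ => by simp only [fixes, h, Perm.one_apply]⟩
  refine (lineAction_mk_eq_one_iff_of_support (hu_supp x.1) (hv_supp x.1) x.2).2 fun p hp i => ?_
  have h_code : encode p < bound x := by rw [encode_int]; grind
  simpa only [Denumerable.ofNat_encode] using h _ h_code i (hL i)

end Decidability

section Marks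

variable {ι : Type*}

/-- The decoration of the line by `a` at `q` if `b` is true, and the blank decoration otherwise. -/
def mark (q : ℤ) (b : Bool) (a : Perm ι) (p : ℤ) : Perm ι := if b ∧ p = q then a else 1

theorem mark_false (q : ℤ) (a : Perm ι) : mark q false a = 1 := by
  funext p
  simp [mark]

theorem mark_inv (q : ℤ) (b : Bool) (a : Perm ι) (p : ℤ) :
    (mark q b a p)⁻¹ = mark q b a⁻¹ p := by
  simp only [mark, apply_ite (·⁻¹), inv_one]

theorem mark_add_right (q d : ℤ) (b : Bool) (a : Perm ι) :
    (fun p => mark q b a (p + d)) = mark (q - d) b a := by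
  ext1 p
  simp only [mark, eq_sub_iff_add_eq]

theorem mark_eq_one_of_ne {p q : ℤ} (h : p ≠ q) (b : Bool) (a : Perm ι) : mark q b a p = 1 :=
  if_neg fun hp => h hp.2

theorem primrec_mark {α : Type*} [Primcodable α] [Primcodable ι] [Finite ι] {q : α → ℤ}
    {b : α → Bool} (hq : Primrec q) (hb : Primrec b) (a : Perm ι) :
    Primrec fun x : α × (ℤ × ι) => mark (q x.1) (b x.1) a x.2.1 x.2.2 := by
  refine (Primrec.ite ((Primrec.eq.comp (hb.comp .fst) (.const true)).and
    (Primrec.eq.comp (Primrec.fst.comp .snd) (hq.comp .fst)))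
    ((Primrec.dom_finite a).comp (Primrec.snd.comp .snd)) (Primrec.snd.comp .snd)).of_eq
    fun x => ?_
  simp only [mark]
  split_ifs <;> rfl

end Marks

section CommutatorWord

open scoped commutatorElement

/-- The word `β⁻ⁿ τ βⁿ`, which applies at `p` the decoration that `τ` carries at `p + n`. -/
def conjWord (n : ℕ) : List (Fin 3 × Bool) :=
  List.replicate n (0, false) ++ (2, true) :: List.replicate n (0, true)

/-- The commutator of `σ` with `β⁻ⁿ τ βⁿ`, as a word. -/
def commWord (n : ℕ) : List (Fin 3 × Bool) :=
  (1, true) :: conjWord n ++ (1, false) :: FreeGroup.invRev (conjWord n)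

theorem primrec_commWord : Primrec commWord := by
  have h_conj : Primrec conjWord :=
    Primrec.list_append.comp (primrec_list_replicate _)
      (Primrec.list_cons.comp (.const _) (primrec_list_replicate _))
  have h_invRev : Primrec (FreeGroup.invRev : List (Fin 3 × Bool) → _) :=
    Primrec.list_reverse.comp (Primrec.list_map .id
      ((Primrec.dom_finite fun l : Fin 3 × Bool => (l.1, !l.2)).comp .snd).to₂)
  exact Primrec.list_cons.comp (.const _) (Primrec.list_append.comp h_conj
    (Primrec.list_cons.comp (.const _) (h_invRev.comp h_conj)))

theorem mk_conjWord (n : ℕ) :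
    FreeGroup.mk (conjWord n) =
      (FreeGroup.of 0 ^ n)⁻¹ * FreeGroup.of 2 * FreeGroup.of 0 ^ n := by
  have h_pow : (FreeGroup.of (0 : Fin 3)) ^ n = .mk (List.replicate n (0, true)) := by
    rw [FreeGroup.of, FreeGroup.pow_mk, List.flatten_replicate_singleton]
  rw [h_pow, FreeGroup.inv_mk, FreeGroup.of, FreeGroup.mul_mk, FreeGroup.mul_mk]
  simp [conjWord, FreeGroup.invRev]

theorem mk_commWord (n : ℕ) :
    FreeGroup.mk (commWord n) = ⁅FreeGroup.of (1 : Fin 3), FreeGroup.mk (conjWord n)⁆ := by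
  rw [commutatorElement_def, FreeGroup.of, FreeGroup.inv_mk, FreeGroup.inv_mk, FreeGroup.mul_mk,
    FreeGroup.mul_mk, FreeGroup.mul_mk]
  simp [commWord, FreeGroup.invRev]

variable {ι : Type*} {u v : ℤ → Perm ι}

theorem lineAction_mk_conjWord (n : ℕ) :
    lineAction u v (.mk (conjWord n)) = fiberwise fun p => v (p + n) := by
  rw [mk_conjWord, ← lineShift_conj_fiberwise, ← lineShift_one_pow]
  simp only [lineAction, map_mul, map_inv, map_pow, FreeGroup.lift_apply_of, lineGen_zero,
    lineGen_two]

theorem lineAction_mk_commWord_eq_one_iff (n : ℕ) :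
    lineAction u v (.mk (commWord n)) = 1 ↔ ∀ p, Commute (u p) (v (p + n)) := by
  have h_sigma : lineAction u v (.of 1) = fiberwise u := FreeGroup.lift_apply_of
  rw [mk_commWord, map_commutatorElement, lineAction_mk_conjWord, h_sigma,
    commutatorElement_eq_one_iff_commute, commute_map_iff fiberwise_injective, Pi.commute_iff]

end CommutatorWord

section MarkedLine

/-- The permutations `β, σ, τ` of the line with fibre `Fin 3` on which `σ` swaps `0` and `1` over
the origin if `b` is true and `τ` swaps `1` and `2` over `n` if `c` is true. -/
def markGen (b c : Bool) (n : ℕ) : Fin 3 → Perm (ℤ × Fin 3) :=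
  lineGen (mark 0 b (Equiv.swap 0 1)) (mark n c (Equiv.swap 1 2))

/-- The action of the free group through `markGen`. -/
def markAction (b c : Bool) (n : ℕ) : FreeGroup (Fin 3) →* Perm (ℤ × Fin 3) :=
  FreeGroup.lift (markGen b c n)

theorem markAction_false_right (b : Bool) (m n : ℕ) :
    markAction b false m = markAction b false n := by
  simp only [markAction, markGen, mark_false]

section Primrec

variable {α : Type*} [Primcodable α] {b c : α → Bool} {n : α → ℕ}

theorem primrec_markGen (hb : Primrec b) (hc : Primrec c) (hn : Primrec n) (i : Fin 3) :
    Primrec fun x : α × (ℤ × Fin 3) => markGen (b x.1) (c x.1) (n x.1) i x.2 :=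
  primrec_lineGen (u := fun x => mark 0 (b x) (Equiv.swap 0 1))
    (v := fun x => mark (n x) (c x) (Equiv.swap 1 2)) (primrec_mark (.const 0) hb _)
    (primrec_mark (primrec_natCast.comp hn) hc _) i

theorem primrecPred_markAction_mk_eq_one (hb : Primrec b) (hc : Primrec c) (hn : Primrec n)
    {w : α → List (Fin 3 × Bool)} (hw : Primrec w) :
    PrimrecPred fun x => markAction (b x) (c x) (n x) (.mk (w x)) = 1 := by
  have h_sigma (a : Perm (Fin 3)) := primrec_mark (.const 0) hb a
  have h_tau (a : Perm (Fin 3)) := primrec_mark (primrec_natCast.comp hn) hc a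
  refine (primrecRel_lineAction_mk_eq_one (u := fun x => mark 0 (b x) (Equiv.swap 0 1))
    (v := fun x => mark (n x) (c x) (Equiv.swap 1 2)) hn
    (fun x q hq => mark_eq_one_of_ne (by grind) _ _)
    (fun x q hq => mark_eq_one_of_ne (by grind) _ _) (h_sigma _) (h_tau _) ?_ ?_).comp .id hw
  · simpa only [mark_inv] using h_sigma (Equiv.swap 0 1)⁻¹
  · simpa only [mark_inv] using h_tau (Equiv.swap 1 2)⁻¹

end Primrec

theorem markAction_mk_commWord_eq_one_iff (b c : Bool) (m n : ℕ) :
    markAction b c m (.mk (commWord n)) = 1 ↔ ¬ (b ∧ c ∧ n = m) := by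
  have h_swap : ¬ Commute (Equiv.swap (0 : Fin 3) 1) (Equiv.swap 1 2) := by
    unfold Commute SemiconjBy
    decide
  refine (lineAction_mk_commWord_eq_one_iff n).trans
    ⟨fun h ⟨hb, hc, hnm⟩ => h_swap (by simpa [mark, hb, hc, hnm] using h 0), fun h p => ?_⟩
  by_cases hp : b ∧ p = 0
  · obtain ⟨hb, rfl⟩ := hp
    have h_tau : mark m c (Equiv.swap (1 : Fin 3) 2) (0 + n) = 1 := if_neg (by grind)
    exact h_tau ▸ .one_right _
  · have h_sigma : mark 0 b (Equiv.swap (0 : Fin 3) 1) p = 1 := if_neg hp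
    exact h_sigma ▸ .one_left _

theorem markAction_mk_eq_one_of_far_apart {w : List (Fin 3 × Bool)} {n : ℕ}
    (h_sigma : markAction true false 0 (.mk w) = 1) (h_tau : markAction false true 0 (.mk w) = 1)
    (hn : 2 * w.length < n) : markAction true true n (.mk w) = 1 := by
  refine lineAction_mk_eq_one_of_far_apart ?_ ?_ fun p q hp hq => ?_
  · rwa [← mark_false 0 (Equiv.swap 1 2)]
  · rw [← lineAction_add_right_eq_one_iff n, mark_add_right, sub_self,
      ← mark_false 0 (Equiv.swap 0 1), mark_add_right]
    exact h_tau
  · obtain rfl : p = 0 := by_contra fun h => hp (mark_eq_one_of_ne h _ _)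
    obtain rfl : q = n := by_contra fun h => hq (mark_eq_one_of_ne h _ _)
    rw [zero_sub, abs_neg]
    grind

end MarkedLine

section Components

/-- The generators `β, σ, τ` attached to a program `c`, acting on a disjoint union of marked lines:
the line `none` carries only the mark of `τ`, and the line `some (n, t)` carries the mark of `σ`,
together with the mark of `τ` over `n` if `c` halts on input `n` within `t` steps. -/
noncomputable def componentGen (c : Code) (i : Fin 3) : Perm ℕ :=
  codePerm (fiberwise fun a : Option (ℕ × ℕ) => markGen a.isSome
    (a.elim true fun x => (c.evaln x.2 x.1).isSome) (a.elim 0 Prod.fst) i)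

theorem computable_componentGen (c : Code) (i : Fin 3) : Computable (componentGen c i) := by
  have h_halt : Primrec fun a : Option (ℕ × ℕ) =>
      a.elim true fun x => (c.evaln x.2 x.1).isSome := by
    refine (Primrec.option_casesOn .id (.const true) (Primrec.option_isSome.comp
      (Code.primrec_evaln.comp (((Primrec.snd.comp .snd).pair (.const c)).pair
        (Primrec.fst.comp .snd)))).to₂).of_eq fun a => ?_
    cases a <;> rfl
  have h_pos : Primrec fun a : Option (ℕ × ℕ) => a.elim 0 Prod.fst := by
    refine (Primrec.option_casesOn .id (.const 0) (Primrec.fst.comp .snd).to₂).of_eq fun a => ?_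
    cases a <;> rfl
  exact computable_codePerm
    (Primrec.fst.pair (primrec_markGen .option_isSome h_halt h_pos i)).to_comp

theorem lift_componentGen_eq_one_iff (c : Code) (w : FreeGroup (Fin 3)) :
    FreeGroup.lift (componentGen c) w = 1 ↔ markAction true false 0 w = 1 ∧
      markAction false true 0 w = 1 ∧ ∀ n, (c.eval n).Dom → markAction true true n w = 1 := by
  have h_lines : FreeGroup.lift (componentGen c) w = 1 ↔ markAction false true 0 w = 1 ∧
      ∀ n t, markAction true (c.evaln t n).isSome n w = 1 :=
    (lift_codePerm_fiberwise_eq_one_iff _ w).trans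
      (Option.forall.trans (and_congr_right' Prod.forall))
  rw [h_lines]
  refine ⟨fun ⟨h_tau, h⟩ => ⟨?_, h_tau, fun n hn => ?_⟩,
    fun ⟨h_sigma, h_tau, h_both⟩ => ⟨h_tau, fun n t => ?_⟩⟩
  · simpa [Code.evaln] using h 0 0
  · obtain ⟨t, ht⟩ := Code.evaln_complete.1 (Part.get_mem hn)
    simpa only [Option.isSome_of_mem ht] using h n t
  · cases ht : c.evaln t n with
    | none => exact markAction_false_right true 0 n ▸ h_sigma
    | some m => exact h_both n (Part.dom_iff_mem.2 ⟨m, Code.evaln_sound ht⟩)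

end Components

/-- The word problem of the group generated by `g`: the codes of the words that evaluate to the
identity, where a letter `(i, b)` stands for `g i` if `b` is true and for its inverse if not. -/
def wordProblem (g : Fin 3 → Perm ℕ) : Set ℕ :=
  encode '' {w : List (Fin 3 × Bool) | FreeGroup.lift g (.mk w) = 1}

theorem ttRed_wordProblem {c : Code} {S : Set ℕ} (hS : Sᶜ = {n | (c.eval n).Dom}) :
    TTRed (wordProblem (componentGen c)) S := by
  refine TTRed.encode_image (b := fun w => 2 * w.length + 1)
    (Primrec.succ.comp (Primrec.nat_mul.comp (.const 2) .list_length))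
    ((primrecPred_markAction_mk_eq_one (.const true) (.const false) (.const 0) .id).and
      (primrecPred_markAction_mk_eq_one (.const false) (.const true) (.const 0) .id))
    (P := fun n w => markAction true true n (.mk w) = 1)
    (primrecPred_markAction_mk_eq_one (.const true) (.const true) .fst .snd) fun w => ?_
  have h_dom (n : ℕ) : (c.eval n).Dom ↔ n ∉ S := (Set.ext_iff.1 hS n).symm
  simp only [Set.mem_ofPred_eq, lift_componentGen_eq_one_iff, h_dom, and_assoc]
  refine and_congr_right fun h_sigma => and_congr_right fun h_tau => ?_
  refine ⟨fun h n _ => or_iff_not_imp_left.2 (h n), fun h n hn => ?_⟩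
  by_cases h_far : 2 * w.length < n
  · exact markAction_mk_eq_one_of_far_apart h_sigma h_tau h_far
  · exact (h n (by omega)).resolve_left hn

theorem manyOneReducible_wordProblem {c : Code} {S : Set ℕ} (hS : Sᶜ = {n | (c.eval n).Dom}) :
    (· ∈ S) ≤₀ (· ∈ wordProblem (componentGen c)) := by
  refine ⟨fun n => encode (commWord n), (Primrec.encode.comp primrec_commWord).to_comp,
    fun n => ?_⟩
  have h_dom : (c.eval n).Dom ↔ n ∉ S := (Set.ext_iff.1 hS n).symm
  simp only [wordProblem, encode_injective.mem_set_image, Set.mem_ofPred_eq,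
    lift_componentGen_eq_one_iff, markAction_mk_commWord_eq_one_iff]
  grind

theorem stmt18 (S : Set ℕ) (hS : CeSet Sᶜ) :
    ∃ g : Fin 3 → Equiv.Perm ℕ,
      (∀ i, Computable ⇑(g i)) ∧
      TTEquiv
        (Encodable.encode ''
          {w : List (Fin 3 × Bool) | FreeGroup.lift g (FreeGroup.mk w) = 1})
        S := by
  obtain ⟨e, he⟩ := hS
  exact ⟨componentGen _, computable_componentGen _, ttRed_wordProblem he,
    .of_manyOneReducible (manyOneReducible_wordProblem he)⟩
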